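/- arXiv:1109.3528 — 2 statements merged into one kernel-verified Lean document; each statement's English description precedes it below -/
import Mathlib

section
/- For all integers k, k₀, l with k > k₀ ≥ 0, k₀ ≤ l ≤ k−1, and (k₀, l) ≠ (0,0), there exists a constant C > 0 such that for every 2π-periodic C^k function φ : ℝ² → ℂ, ‖∇^lφ‖_{L⁴(T²)} ≤ C ‖∇^{k₀}φ‖_{L²(T²)}^{(k−l−1/2)/(k−k₀)} ‖∇^kφ‖_{L²(T²)}^{(l−k₀+1/2)/(k−k₀)}. -/
open MeasureTheory Real Set

noncomputable section

abbrev R2 := EuclideanSpace ℝ (Fin 2)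

def Q2 : Set R2 := {x | ∀ i, x i ∈ Icc (-π) π}

def Periodic2 {E : Type*} (f : R2 → E) : Prop :=
  ∀ (x : R2) (k : Fin 2 → ℤ),
    f (x + (EuclideanSpace.equiv (Fin 2) ℝ).symm (fun i => 2 * π * (k i : ℝ))) = f x

/-- One-dimensional interpolation. -/
lemma one_interp {H : Type*} [NormedAddCommGroup H] [InnerProductSpace ℝ H]
    (u u1 u2 : ℝ → H) (h1 : ∀ t, HasDerivAt u (u1 t) t)
    (h2 : ∀ t, HasDerivAt u1 (u2 t) t) (hc : Continuous u2)
    (hp : u π = u (-π)) (hp1 : u1 π = u1 (-π)) :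
    ∫ t in (-π)..π, ‖u1 t‖ ^ 2 ≤ ∫ t in (-π)..π, ‖u t‖ * ‖u2 t‖ := by
  have cu : Continuous u := continuous_iff_continuousAt.2 fun t => (h1 t).continuousAt
  have cu1 : Continuous u1 := continuous_iff_continuousAt.2 fun t => (h2 t).continuousAt
  have key : ∫ t in (-π)..π, (inner ℝ (u t) (u2 t) + inner ℝ (u1 t) (u1 t)) = 0 := by
    rw [intervalIntegral.integral_eq_sub_of_hasDerivAt
      (f := fun t => inner ℝ (u t) (u1 t))]
    · rw [hp, hp1]; simp
    · intro t _
      exact (h1 t).inner ℝ (h2 t)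
    · apply Continuous.intervalIntegrable
      fun_prop
  have le : -π ≤ π := by linarith [pi_pos]
  have : 0 ≤ ∫ t in (-π)..π, (‖u t‖ * ‖u2 t‖ - ‖u1 t‖ ^ 2 +
      (inner ℝ (u t) (u2 t) + inner ℝ (u1 t) (u1 t))) := by
    apply intervalIntegral.integral_nonneg le
    intro t _
    rw [real_inner_self_eq_norm_sq]
    have := neg_le_of_abs_le (abs_real_inner_le_norm (u t) (u2 t))
    linarith
  rw [intervalIntegral.integral_add, key, intervalIntegral.integral_sub] at this
  · linarith
  all_goals
    apply Continuous.intervalIntegrable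
    fun_prop

lemma one_interpE (E : Type*) [NormedAddCommGroup E] [NormedSpace ℝ E] [FiniteDimensional ℝ E] :
    ∃ C : ℝ, 0 ≤ C ∧ ∀
    (u u1 u2 : ℝ → E) (h1 : ∀ t, HasDerivAt u (u1 t) t)
    (h2 : ∀ t, HasDerivAt u1 (u2 t) t) (hc : Continuous u2)
    (hp : u π = u (-π)) (hp1 : u1 π = u1 (-π)),
    ∫ t in (-π)..π, ‖u1 t‖ ^ 2 ≤ C * ∫ t in (-π)..π, ‖u t‖ * ‖u2 t‖ := by
  let L : E ≃L[ℝ] EuclideanSpace ℝ (Fin (Module.finrank ℝ E)) := toEuclidean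
  let A : E →L[ℝ] EuclideanSpace ℝ (Fin (Module.finrank ℝ E)) := L
  let B : EuclideanSpace ℝ (Fin (Module.finrank ℝ E)) →L[ℝ] E := L.symm
  have hBA : ∀ x, B (A x) = x := fun x => L.symm_apply_apply x
  refine ⟨‖B‖ ^ 2 * ‖A‖ ^ 2, by positivity, ?_⟩
  intro u u1 u2 h1 h2 hc hp hp1
  have cu : Continuous u := continuous_iff_continuousAt.2 fun t => (h1 t).continuousAt
  have cu1 : Continuous u1 := continuous_iff_continuousAt.2 fun t => (h2 t).continuousAt
  have le : -π ≤ π := by linarith [pi_pos]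
  have key := one_interp (fun t => A (u t)) (fun t => A (u1 t)) (fun t => A (u2 t))
    (fun t => A.hasFDerivAt.comp_hasDerivAt t (h1 t))
    (fun t => A.hasFDerivAt.comp_hasDerivAt t (h2 t)) (by fun_prop) (by simp only [hp])
    (by simp only [hp1])
  calc ∫ t in (-π)..π, ‖u1 t‖ ^ 2 ≤ ∫ t in (-π)..π, ‖B‖ ^ 2 * ‖A (u1 t)‖ ^ 2 := by
        apply intervalIntegral.integral_mono le
        · apply Continuous.intervalIntegrable
          fun_prop
        · apply Continuous.intervalIntegrable
          fun_prop
        intro t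
        dsimp only
        rw [← mul_pow]
        gcongr
        conv_lhs => rw [← hBA (u1 t)]
        exact B.le_opNorm _
    _ = ‖B‖ ^ 2 * ∫ t in (-π)..π, ‖A (u1 t)‖ ^ 2 := by simp
    _ ≤ ‖B‖ ^ 2 * ∫ t in (-π)..π, ‖A (u t)‖ * ‖A (u2 t)‖ := by gcongr
    _ ≤ ‖B‖ ^ 2 * ∫ t in (-π)..π, ‖A‖ ^ 2 * (‖u t‖ * ‖u2 t‖) := by
        gcongr
        apply intervalIntegral.integral_mono le
        · apply Continuous.intervalIntegrable
          fun_prop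
        · apply Continuous.intervalIntegrable
          fun_prop
        intro t
        dsimp only
        calc ‖A (u t)‖ * ‖A (u2 t)‖ ≤ (‖A‖ * ‖u t‖) * (‖A‖ * ‖u2 t‖) := by
              gcongr <;> exact A.le_opNorm _
          _ = _ := by ring
    _ = _ := by simp [mul_assoc]

/-- One-dimensional pointwise bound of the square. -/
lemma one_sup {H : Type*} [NormedAddCommGroup H] [InnerProductSpace ℝ H]
    (u u1 : ℝ → H) (h1 : ∀ t, HasDerivAt u (u1 t) t) (hc : Continuous u1)
    (t : ℝ) (ht : t ∈ Icc (-π) π) :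
    ‖u t‖ ^ 2 ≤ ∫ s in (-π)..π, (‖u s‖ ^ 2 + 2 * (‖u s‖ * ‖u1 s‖)) := by
  have cu : Continuous u := continuous_iff_continuousAt.2 fun t => (h1 t).continuousAt
  have le : -π ≤ π := by linarith [pi_pos]
  have step : ∀ s ∈ Icc (-π) π, ‖u t‖ ^ 2 ≤ ‖u s‖ ^ 2 +
      ∫ r in (-π)..π, 2 * (‖u r‖ * ‖u1 r‖) := by
    intro s hs
    have e : ∫ r in s..t, 2 * inner ℝ (u r) (u1 r) = ‖u t‖ ^ 2 - ‖u s‖ ^ 2 := by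
      rw [intervalIntegral.integral_eq_sub_of_hasDerivAt (f := fun r => ‖u r‖ ^ 2)]
      · intro r _
        exact (h1 r).norm_sq
      · apply Continuous.intervalIntegrable
        fun_prop
    have e2 : ‖∫ r in s..t, 2 * inner ℝ (u r) (u1 r)‖ ≤
        ∫ r in uIoc s t, 2 * (‖u r‖ * ‖u1 r‖) := by
      refine intervalIntegral.norm_integral_le_integral_norm_uIoc.trans ?_
      apply setIntegral_mono
      · apply (Continuous.integrableOn_uIcc _).mono_set uIoc_subset_uIcc
        fun_prop
      · apply (Continuous.integrableOn_uIcc _).mono_set uIoc_subset_uIcc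
        fun_prop
      · intro r
        have := abs_real_inner_le_norm (u r) (u1 r)
        simp only [norm_mul, Real.norm_eq_abs, abs_two]
        linarith
    have e3 : ∫ r in uIoc s t, 2 * (‖u r‖ * ‖u1 r‖) ≤
        ∫ r in (-π)..π, 2 * (‖u r‖ * ‖u1 r‖) := by
      rw [intervalIntegral.integral_of_le le]
      apply setIntegral_mono_set
      · rw [← intervalIntegrable_iff_integrableOn_Ioc_of_le le]
        apply Continuous.intervalIntegrable
        fun_prop
      · filter_upwards with r
        positivity
      · apply LE.le.eventuallyLE
        apply Ioc_subset_Ioc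
        · exact le_min hs.1 ht.1
        · exact max_le hs.2 ht.2
    rw [e, Real.norm_eq_abs] at e2
    linarith [le_abs_self (‖u t‖ ^ 2 - ‖u s‖ ^ 2)]
  have avg : ∫ s in (-π)..π, ‖u t‖ ^ 2 ≤ ∫ s in (-π)..π, (‖u s‖ ^ 2 +
      ∫ r in (-π)..π, 2 * (‖u r‖ * ‖u1 r‖)) := by
    apply intervalIntegral.integral_mono_on le
    · apply Continuous.intervalIntegrable
      fun_prop
    · apply Continuous.intervalIntegrable
      fun_prop
    · exact step
  rw [intervalIntegral.integral_add, intervalIntegral.integral_const,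
    intervalIntegral.integral_const] at avg
  rotate_left
  · apply Continuous.intervalIntegrable
    fun_prop
  · apply Continuous.intervalIntegrable
    fun_prop
  rw [intervalIntegral.integral_add]
  rotate_left
  · apply Continuous.intervalIntegrable
    fun_prop
  · apply Continuous.intervalIntegrable
    fun_prop
  have n1 : 0 ≤ ∫ s in (-π)..π, ‖u s‖ ^ 2 :=
    intervalIntegral.integral_nonneg le fun s _ => by positivity
  simp only [smul_eq_mul] at avg
  have hpi := pi_gt_three
  set X := ∫ s in (-π)..π, ‖u s‖ ^ 2
  set Y := ∫ s in (-π)..π, 2 * (‖u s‖ * ‖u1 s‖)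
  by_contra hcon
  push Not at hcon
  nlinarith

lemma one_supE (E : Type*) [NormedAddCommGroup E] [NormedSpace ℝ E] [FiniteDimensional ℝ E] :
    ∃ C : ℝ, 0 ≤ C ∧ ∀ (u u1 : ℝ → E) (h1 : ∀ t, HasDerivAt u (u1 t) t) (hc : Continuous u1)
    (t : ℝ) (ht : t ∈ Icc (-π) π),
    ‖u t‖ ^ 2 ≤ C * ∫ s in (-π)..π, (‖u s‖ ^ 2 + 2 * (‖u s‖ * ‖u1 s‖)) := by
  let L : E ≃L[ℝ] EuclideanSpace ℝ (Fin (Module.finrank ℝ E)) := toEuclidean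
  let A : E →L[ℝ] EuclideanSpace ℝ (Fin (Module.finrank ℝ E)) := L
  let B : EuclideanSpace ℝ (Fin (Module.finrank ℝ E)) →L[ℝ] E := L.symm
  have hBA : ∀ x, B (A x) = x := fun x => L.symm_apply_apply x
  refine ⟨‖B‖ ^ 2 * ‖A‖ ^ 2, by positivity, ?_⟩
  intro u u1 h1 hc t ht
  have cu : Continuous u := continuous_iff_continuousAt.2 fun t => (h1 t).continuousAt
  have le : -π ≤ π := by linarith [pi_pos]
  have key := one_sup (fun t => A (u t)) (fun t => A (u1 t))
    (fun t => A.hasFDerivAt.comp_hasDerivAt t (h1 t)) (by fun_prop) t ht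
  calc ‖u t‖ ^ 2 ≤ ‖B‖ ^ 2 * ‖A (u t)‖ ^ 2 := by
        rw [← mul_pow]
        gcongr
        conv_lhs => rw [← hBA (u t)]
        exact B.le_opNorm _
    _ ≤ ‖B‖ ^ 2 * ∫ s in (-π)..π, (‖A (u s)‖ ^ 2 + 2 * (‖A (u s)‖ * ‖A (u1 s)‖)) := by gcongr
    _ ≤ ‖B‖ ^ 2 * ∫ s in (-π)..π, ‖A‖ ^ 2 * (‖u s‖ ^ 2 + 2 * (‖u s‖ * ‖u1 s‖)) := by
        gcongr
        apply intervalIntegral.integral_mono le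
        · apply Continuous.intervalIntegrable
          fun_prop
        · apply Continuous.intervalIntegrable
          fun_prop
        intro s
        dsimp only
        calc ‖A (u s)‖ ^ 2 + 2 * (‖A (u s)‖ * ‖A (u1 s)‖)
            ≤ (‖A‖ * ‖u s‖) ^ 2 + 2 * ((‖A‖ * ‖u s‖) * (‖A‖ * ‖u1 s‖)) := by
              gcongr <;> exact A.le_opNorm _
          _ = _ := by ring
    _ = _ := by rw [intervalIntegral.integral_const_mul, mul_assoc]

/-- One-dimensional Poincare inequality for the derivative of a periodic function. -/
lemma one_poincare {E : Type*} [NormedAddCommGroup E] [NormedSpace ℝ E] [CompleteSpace E]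
    (u u1 u2 : ℝ → E) (h1 : ∀ t, HasDerivAt u (u1 t) t)
    (h2 : ∀ t, HasDerivAt u1 (u2 t) t) (hc : Continuous u2)
    (hp : u π = u (-π)) :
    ∫ t in (-π)..π, ‖u1 t‖ ^ 2 ≤ (2 * π) ^ 2 * ∫ t in (-π)..π, ‖u2 t‖ ^ 2 := by
  have cu1 : Continuous u1 := continuous_iff_continuousAt.2 fun t => (h2 t).continuousAt
  have le : -π ≤ π := by linarith [pi_pos]
  have hpi := pi_pos
  have mean : ∫ s in (-π)..π, u1 s = 0 := by
    rw [intervalIntegral.integral_eq_sub_of_hasDerivAt (f := u), hp, sub_self]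
    · intro r _
      exact h1 r
    · exact cu1.intervalIntegrable _ _
  set Y := ∫ r in (-π)..π, ‖u2 r‖ with hY
  have step : ∀ t ∈ Icc (-π) π, ∀ s ∈ Icc (-π) π, ‖u1 t - u1 s‖ ≤ Y := by
    intro t ht s hs
    have e : ∫ r in s..t, u2 r = u1 t - u1 s := by
      rw [intervalIntegral.integral_eq_sub_of_hasDerivAt (f := u1)]
      · intro r _
        exact h2 r
      · exact hc.intervalIntegrable _ _
    rw [← e]
    refine intervalIntegral.norm_integral_le_integral_norm_uIoc.trans ?_
    rw [hY, intervalIntegral.integral_of_le le]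
    apply setIntegral_mono_set
    · rw [← intervalIntegrable_iff_integrableOn_Ioc_of_le le]
      apply Continuous.intervalIntegrable
      fun_prop
    · filter_upwards with r
      positivity
    · apply LE.le.eventuallyLE
      apply Ioc_subset_Ioc
      · exact le_min hs.1 ht.1
      · exact max_le hs.2 ht.2
  have pw : ∀ t ∈ Icc (-π) π, ‖u1 t‖ ≤ Y := by
    intro t ht
    have e : ∫ s in (-π)..π, (u1 t - u1 s) = (2 * π) • u1 t := by
      rw [intervalIntegral.integral_sub, mean, intervalIntegral.integral_const, sub_zero]
      · congr 1; ring
      · exact intervalIntegrable_const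
      · exact cu1.intervalIntegrable _ _
    have e2 := intervalIntegral.norm_integral_le_of_norm_le_const (a := -π) (b := π) (C := Y)
      (f := fun s => u1 t - u1 s) (by
        intro s hs
        rw [uIoc_of_le le] at hs
        exact step t ht s (Ioc_subset_Icc_self hs))
    rw [e, norm_smul, Real.norm_eq_abs, abs_of_pos (by positivity), sub_neg_eq_add, ← two_mul,
      abs_of_pos (by positivity)] at e2
    nlinarith
  have Y0 : 0 ≤ Y := intervalIntegral.integral_nonneg le fun s _ => norm_nonneg _
  have cs : Y ^ 2 ≤ 2 * π * ∫ t in (-π)..π, ‖u2 t‖ ^ 2 := by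
    have n : 0 ≤ ∫ t in (-π)..π, (‖u2 t‖ - Y / (2 * π)) ^ 2 :=
      intervalIntegral.integral_nonneg le fun s _ => sq_nonneg _
    have e : ∫ t in (-π)..π, (‖u2 t‖ - Y / (2 * π)) ^ 2 =
        (∫ t in (-π)..π, ‖u2 t‖ ^ 2) - (Y / π) * Y + 2 * π * (Y / (2 * π)) ^ 2 := by
      have : ∀ t, (‖u2 t‖ - Y / (2 * π)) ^ 2 =
        ‖u2 t‖ ^ 2 - (Y / π) * ‖u2 t‖ + (Y / (2 * π)) ^ 2 := by
        intro t; field_simp; ring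
      simp_rw [this]
      rw [intervalIntegral.integral_add, intervalIntegral.integral_sub,
        intervalIntegral.integral_const_mul, intervalIntegral.integral_const]
      · rw [smul_eq_mul]; ring
      all_goals
        apply Continuous.intervalIntegrable
        fun_prop
    rw [e] at n
    set X := ∫ t in (-π)..π, ‖u2 t‖ ^ 2
    have : X - (Y / π) * Y + 2 * π * (Y / (2 * π)) ^ 2 = (2 * π * X - Y ^ 2) / (2 * π) := by
      field_simp; ring
    rw [this] at n
    have := (le_div_iff₀ (by positivity : (0:ℝ) < 2 * π)).1 n
    linarith
  calc ∫ t in (-π)..π, ‖u1 t‖ ^ 2 ≤ ∫ t in (-π)..π, Y ^ 2 := by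
        apply intervalIntegral.integral_mono_on le
        · apply Continuous.intervalIntegrable
          fun_prop
        · exact intervalIntegrable_const
        · intro t ht
          have := pw t ht
          gcongr
    _ = 2 * π * Y ^ 2 := by rw [intervalIntegral.integral_const, smul_eq_mul]; ring
    _ ≤ 2 * π * (2 * π * ∫ t in (-π)..π, ‖u2 t‖ ^ 2) := by gcongr
    _ = _ := by ring

/-- The line in direction `i` with the other coordinate equal to `c`. -/
def pline (i : Fin 2) (c t : ℝ) : R2 := if i = 0 then !₂[t, c] else !₂[c, t]

lemma pline_zero (c t : ℝ) : pline 0 c t = !₂[t, c] := by simp [pline]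

lemma pline_one (c t : ℝ) : pline 1 c t = !₂[c, t] := by simp [pline]

lemma pt_continuous : Continuous fun p : ℝ × ℝ => (!₂[p.1, p.2] : R2) := by
  apply (PiLp.continuous_toLp 2 _).comp
  apply continuous_pi
  intro i
  fin_cases i
  · exact continuous_fst
  · exact continuous_snd

lemma pline_continuous (i : Fin 2) : Continuous fun p : ℝ × ℝ => pline i p.1 p.2 := by
  fin_cases i
  · simp only [Fin.zero_eta, pline_zero]
    exact pt_continuous.comp continuous_swap
  · simp only [Fin.mk_one, pline_one]
    exact pt_continuous

lemma pline_continuous' (i : Fin 2) (c : ℝ) : Continuous (pline i c) :=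
  (pline_continuous i).comp (Continuous.prodMk_right c)

lemma Q2_compact : IsCompact Q2 := by
  have : Q2 = (fun p : ℝ × ℝ => (!₂[p.1, p.2] : R2)) '' (Icc (-π) π ×ˢ Icc (-π) π) := by
    ext x
    simp only [Q2, mem_setOf_eq, mem_image, mem_prod, Prod.exists, Fin.forall_fin_two]
    constructor
    · intro h
      refine ⟨x 0, x 1, h, ?_⟩
      ext i; fin_cases i <;> simp
    · rintro ⟨a, b, h, rfl⟩
      simpa using h
  rw [this]
  exact (isCompact_Icc.prod isCompact_Icc).image pt_continuous

lemma Q2_int {f : R2 → ℝ} (hf : Continuous f) : IntegrableOn f Q2 :=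
  hf.continuousOn.integrableOn_compact Q2_compact

lemma Q2_integral (f : R2 → ℝ) (hf : Continuous f) (i : Fin 2) :
    ∫ x in Q2, f x = ∫ c in (-π)..π, ∫ t in (-π)..π, f (pline i c t) := by
  have le : -π ≤ π := by linarith [pi_pos]
  have main : ∫ x in Q2, f x = ∫ a in (-π)..π, ∫ b in (-π)..π, f !₂[a, b] := by
    have mp : MeasurePreserving
        (((MeasurableEquiv.finTwoArrow (α := ℝ)).symm).trans (MeasurableEquiv.toLp 2 (Fin 2 → ℝ)))
        volume volume :=
      ((volume_preserving_finTwoArrow ℝ).symm _).trans (PiLp.volume_preserving_toLp (Fin 2))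
    rw [← mp.setIntegral_preimage_emb (MeasurableEquiv.measurableEmbedding _)]
    have pre : (((MeasurableEquiv.finTwoArrow (α := ℝ)).symm).trans
        (MeasurableEquiv.toLp 2 (Fin 2 → ℝ))) ⁻¹' Q2 = Icc (-π) π ×ˢ Icc (-π) π := by
      ext p
      simp [Q2, MeasurableEquiv.finTwoArrow, Fin.forall_fin_two, -Icc_prod_Icc]
    rw [pre, Measure.volume_eq_prod, setIntegral_prod]
    · simp_rw [integral_Icc_eq_integral_Ioc, ← intervalIntegral.integral_of_le le]
      rfl
    · rw [← Measure.volume_eq_prod]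
      apply ContinuousOn.integrableOn_compact (isCompact_Icc.prod isCompact_Icc)
      exact (hf.comp pt_continuous).continuousOn
  fin_cases i
  · simp only [Fin.zero_eta, pline_zero]
    rw [main, intervalIntegral_intervalIntegral_swap]
    rw [uIoc_of_le le]
    apply IntegrableOn.mono_set _ (prod_mono Ioc_subset_Icc_self Ioc_subset_Icc_self)
    apply ContinuousOn.integrableOn_compact (isCompact_Icc.prod isCompact_Icc)
    exact (hf.comp pt_continuous).continuousOn
  · simpa only [Fin.mk_one, pline_one] using main

lemma Q2_le {f g : R2 → ℝ} (hf : Continuous f) (hg : Continuous g) (i : Fin 2)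
    (h : ∀ c, ∫ t in (-π)..π, f (pline i c t) ≤ ∫ t in (-π)..π, g (pline i c t)) :
    ∫ x in Q2, f x ≤ ∫ x in Q2, g x := by
  have le : -π ≤ π := by linarith [pi_pos]
  rw [Q2_integral f hf i, Q2_integral g hg i]
  apply intervalIntegral.integral_mono le _ _ h
  · apply Continuous.intervalIntegrable
    apply intervalIntegral.continuous_parametric_intervalIntegral_of_continuous'
    exact hf.comp (pline_continuous i)
  · apply Continuous.intervalIntegrable
    apply intervalIntegral.continuous_parametric_intervalIntegral_of_continuous'
    exact hg.comp (pline_continuous i)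

/-- Basis vector. -/
def bv (i : Fin 2) : R2 := EuclideanSpace.single i 1

lemma bv_norm (i : Fin 2) : ‖bv i‖ = 1 := by simp [bv]

lemma pline_eq (i : Fin 2) (c t : ℝ) : pline i c t = pline i c 0 + t • bv i := by
  ext j
  fin_cases i <;> fin_cases j <;> simp [pline, bv]

lemma pline_deriv (i : Fin 2) (c t : ℝ) : HasDerivAt (pline i c) (bv i) t := by
  have : pline i c = fun t => pline i c 0 + t • bv i := funext (pline_eq i c)
  rw [this]
  simpa using ((hasDerivAt_id t).smul_const (bv i)).const_add (pline i c 0)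

lemma pline_periodic {E : Type*} {f : R2 → E} (hf : Periodic2 f) (i : Fin 2) (c : ℝ) :
    f (pline i c π) = f (pline i c (-π)) := by
  rw [← hf (pline i c (-π)) (Pi.single i 1)]
  congr 1
  ext j
  fin_cases i <;> fin_cases j <;> simp [pline] <;> ring

lemma comp_pline {E : Type*} [NormedAddCommGroup E] [NormedSpace ℝ E] {f : R2 → E}
    (hf : Differentiable ℝ f) (i : Fin 2) (c t : ℝ) :
    HasDerivAt (fun t => f (pline i c t)) (fderiv ℝ f (pline i c t) (bv i)) t :=
  (hf _).hasFDerivAt.comp_hasDerivAt t (pline_deriv i c t)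

lemma clm_norm_sq {E : Type*} [NormedAddCommGroup E] [NormedSpace ℝ E] (A : R2 →L[ℝ] E) :
    ‖A‖ ^ 2 ≤ 2 * (‖A (bv 0)‖ ^ 2 + ‖A (bv 1)‖ ^ 2) := by
  have : ‖A‖ ≤ ‖A (bv 0)‖ + ‖A (bv 1)‖ := by
    apply A.opNorm_le_bound (by positivity)
    intro x
    have hx : x = x 0 • bv 0 + x 1 • bv 1 := by
      ext j; fin_cases j <;> simp [bv]
    have h0 := PiLp.norm_apply_le x 0
    have h1 := PiLp.norm_apply_le x 1
    calc ‖A x‖ = ‖x 0 • A (bv 0) + x 1 • A (bv 1)‖ := by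
          conv_lhs => rw [hx, map_add, map_smul, map_smul]
      _ ≤ ‖x 0‖ * ‖A (bv 0)‖ + ‖x 1‖ * ‖A (bv 1)‖ := by
          rw [← norm_smul, ← norm_smul]; exact norm_add_le _ _
      _ ≤ ‖x‖ * ‖A (bv 0)‖ + ‖x‖ * ‖A (bv 1)‖ := by gcongr
      _ = _ := by ring
  calc ‖A‖ ^ 2 ≤ (‖A (bv 0)‖ + ‖A (bv 1)‖) ^ 2 := by gcongr
    _ ≤ _ := by nlinarith [sq_nonneg (‖A (bv 0)‖ - ‖A (bv 1)‖)]

lemma fderiv_periodic {E : Type*} [NormedAddCommGroup E] [NormedSpace ℝ E] {f : R2 → E}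
    (hf : Periodic2 f) : Periodic2 (fderiv ℝ f) := by
  intro x k
  rw [← fderiv_comp_add_right]
  congr 1
  exact funext fun y => hf y k

lemma cs_Q2 {f g : R2 → ℝ} (hf : Continuous f) (hg : Continuous g) :
    (∫ x in Q2, f x * g x) ^ 2 ≤ (∫ x in Q2, f x ^ 2) * ∫ x in Q2, g x ^ 2 := by
  have h : ∀ r : ℝ, 0 ≤ (∫ x in Q2, g x ^ 2) * (r * r) +
      (-2 * ∫ x in Q2, f x * g x) * r + ∫ x in Q2, f x ^ 2 := by
    intro r
    have e : ∫ x in Q2, (f x - r * g x) ^ 2 = (∫ x in Q2, g x ^ 2) * (r * r) +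
      (-2 * ∫ x in Q2, f x * g x) * r + ∫ x in Q2, f x ^ 2 := by
      have : ∀ x, (f x - r * g x) ^ 2 =
        (r * r) * g x ^ 2 + (-2 * r) * (f x * g x) + f x ^ 2 := by intro x; ring
      simp_rw [this]
      rw [integral_add, integral_add, integral_const_mul, integral_const_mul]
      · ring
      all_goals
        apply Q2_int
        fun_prop
    rw [← e]
    apply integral_nonneg
    intro x
    positivity
  have := discrim_le_zero h
  rw [discrim] at this
  nlinarith

set_option maxSynthPendingDepth 3

section two
variable (E : Type*) [NormedAddCommGroup E] [NormedSpace ℝ E] [FiniteDimensional ℝ E]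

lemma split_Q2 {G : R2 → E} (hG : ContDiff ℝ 1 G) {M : ℝ}
    (h : ∀ i, ∫ x in Q2, ‖fderiv ℝ G x (bv i)‖ ^ 2 ≤ M) :
    ∫ x in Q2, ‖fderiv ℝ G x‖ ^ 2 ≤ 4 * M := by
  have c1 : Continuous (fderiv ℝ G) := hG.continuous_fderiv one_ne_zero
  calc ∫ x in Q2, ‖fderiv ℝ G x‖ ^ 2 ≤
      ∫ x in Q2, 2 * (‖fderiv ℝ G x (bv 0)‖ ^ 2 + ‖fderiv ℝ G x (bv 1)‖ ^ 2) := by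
        apply setIntegral_mono (Q2_int (by fun_prop)) (Q2_int (by fun_prop))
        intro x
        exact clm_norm_sq _
    _ = 2 * ((∫ x in Q2, ‖fderiv ℝ G x (bv 0)‖ ^ 2) + ∫ x in Q2, ‖fderiv ℝ G x (bv 1)‖ ^ 2) := by
        rw [integral_const_mul, integral_add (Q2_int (by fun_prop)) (Q2_int (by fun_prop))]
    _ ≤ _ := by linarith [h 0, h 1]

lemma second_le {G : R2 → E} (hG : ContDiff ℝ 2 G) (i : Fin 2) (x : R2) :
    ‖fderiv ℝ (fun y => fderiv ℝ G y (bv i)) x (bv i)‖ ≤ ‖fderiv ℝ (fderiv ℝ G) x‖ := by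
  have d1 : Differentiable ℝ (fderiv ℝ G) :=
    (hG.fderiv_right (m := 1) (by norm_num)).differentiable one_ne_zero
  have : fderiv ℝ (fun y => fderiv ℝ G y (bv i)) x (bv i) =
      fderiv ℝ (fderiv ℝ G) x (bv i) (bv i) := by
    rw [fderiv_clm_apply (d1 x) (differentiableAt_const _)]
    simp
  rw [this]
  calc _ ≤ ‖fderiv ℝ (fderiv ℝ G) x (bv i)‖ * ‖bv i‖ := ContinuousLinearMap.le_opNorm _ _
    _ ≤ ‖fderiv ℝ (fderiv ℝ G) x‖ * ‖bv i‖ * ‖bv i‖ := by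
      gcongr; exact ContinuousLinearMap.le_opNorm _ _
    _ = _ := by simp [bv_norm]

lemma two_interp : ∃ C : ℝ, 0 ≤ C ∧ ∀ G : R2 → E, ContDiff ℝ 2 G → Periodic2 G →
    (∫ x in Q2, ‖fderiv ℝ G x‖ ^ 2) ^ 2 ≤
      C * ((∫ x in Q2, ‖G x‖ ^ 2) * ∫ x in Q2, ‖fderiv ℝ (fderiv ℝ G) x‖ ^ 2) := by
  obtain ⟨C, C0, hC⟩ := one_interpE E
  refine ⟨(4 * C) ^ 2, by positivity, ?_⟩
  intro G hG pG
  have cd1 : ContDiff ℝ 1 (fderiv ℝ G) := hG.fderiv_right (m := 1) (by norm_num)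
  have c0 : Continuous G := hG.continuous
  have c1 : Continuous (fderiv ℝ G) := cd1.continuous
  have c2 : Continuous (fderiv ℝ (fderiv ℝ G)) := cd1.continuous_fderiv one_ne_zero
  have key : ∫ x in Q2, ‖fderiv ℝ G x‖ ^ 2 ≤
      4 * ∫ x in Q2, C * (‖G x‖ * ‖fderiv ℝ (fderiv ℝ G) x‖) := by
    apply split_Q2 E (hG.of_le (by norm_num))
    intro i
    have cdi : ContDiff ℝ 1 (fun y => fderiv ℝ G y (bv i)) := cd1.clm_apply contDiff_const
    have ci := cdi.continuous
    have ci2 : Continuous (fderiv ℝ (fun y => fderiv ℝ G y (bv i))) :=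
      cdi.continuous_fderiv one_ne_zero
    apply Q2_le (by fun_prop) (by fun_prop) i
    intro c
    have pc := pline_continuous' i c
    have := hC (fun t => G (pline i c t)) (fun t => fderiv ℝ G (pline i c t) (bv i))
      (fun t => fderiv ℝ (fun y => fderiv ℝ G y (bv i)) (pline i c t) (bv i))
      (fun t => comp_pline (hG.differentiable (by norm_num)) i c t)
      (fun t => comp_pline (cdi.differentiable (by norm_num)) i c t)
      (by fun_prop) (pline_periodic pG i c)
      (by rw [pline_periodic (fderiv_periodic pG) i c])
    refine this.trans ?_
    rw [intervalIntegral.integral_const_mul]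
    gcongr
    apply intervalIntegral.integral_mono (by linarith [pi_pos])
    · apply Continuous.intervalIntegrable
      fun_prop
    · apply Continuous.intervalIntegrable
      fun_prop
    intro t
    dsimp only
    gcongr
    exact second_le E hG i _
  rw [integral_const_mul] at key
  calc (∫ x in Q2, ‖fderiv ℝ G x‖ ^ 2) ^ 2 ≤
      (4 * (C * ∫ x in Q2, ‖G x‖ * ‖fderiv ℝ (fderiv ℝ G) x‖)) ^ 2 := by
        apply pow_le_pow_left₀ _ key
        apply integral_nonneg
        intro x
        positivity
    _ = (4 * C) ^ 2 * (∫ x in Q2, ‖G x‖ * ‖fderiv ℝ (fderiv ℝ G) x‖) ^ 2 := by ring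
    _ ≤ _ := by
        gcongr
        exact cs_Q2 c0.norm c2.norm

lemma two_poincare (G : R2 → E) (hG : ContDiff ℝ 2 G) (pG : Periodic2 G) :
    ∫ x in Q2, ‖fderiv ℝ G x‖ ^ 2 ≤
      4 * ((2 * π) ^ 2 * ∫ x in Q2, ‖fderiv ℝ (fderiv ℝ G) x‖ ^ 2) := by
  have : CompleteSpace E := FiniteDimensional.complete ℝ E
  have cd1 : ContDiff ℝ 1 (fderiv ℝ G) := hG.fderiv_right (m := 1) (by norm_num)
  have c0 : Continuous G := hG.continuous
  have c1 : Continuous (fderiv ℝ G) := cd1.continuous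
  have c2 : Continuous (fderiv ℝ (fderiv ℝ G)) := cd1.continuous_fderiv one_ne_zero
  rw [← integral_const_mul]
  apply split_Q2 E (hG.of_le (by norm_num))
  intro i
  have cdi : ContDiff ℝ 1 (fun y => fderiv ℝ G y (bv i)) := cd1.clm_apply contDiff_const
  have ci := cdi.continuous
  have ci2 : Continuous (fderiv ℝ (fun y => fderiv ℝ G y (bv i))) :=
    cdi.continuous_fderiv one_ne_zero
  apply Q2_le (by fun_prop) (by fun_prop) i
  intro c
  have pc := pline_continuous' i c
  have := one_poincare (fun t => G (pline i c t)) (fun t => fderiv ℝ G (pline i c t) (bv i))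
    (fun t => fderiv ℝ (fun y => fderiv ℝ G y (bv i)) (pline i c t) (bv i))
    (fun t => comp_pline (hG.differentiable (by norm_num)) i c t)
    (fun t => comp_pline (cdi.differentiable (by norm_num)) i c t)
    (by fun_prop) (pline_periodic pG i c)
  refine this.trans ?_
  rw [intervalIntegral.integral_const_mul]
  gcongr
  apply intervalIntegral.integral_mono (by linarith [pi_pos])
  · apply Continuous.intervalIntegrable
    fun_prop
  · apply Continuous.intervalIntegrable
    fun_prop
  intro t
  dsimp only
  gcongr
  exact second_le E hG i _

lemma two_lad : ∃ C : ℝ, 0 ≤ C ∧ ∀ F : R2 → E, ContDiff ℝ 1 F →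
    ∫ x in Q2, ‖F x‖ ^ 4 ≤
      C * ((∫ x in Q2, ‖F x‖ ^ 2) + 2 * ∫ x in Q2, ‖F x‖ * ‖fderiv ℝ F x‖) ^ 2 := by
  obtain ⟨C, C0, hC⟩ := one_supE E
  refine ⟨C ^ 2, by positivity, ?_⟩
  intro F hF
  have le : -π ≤ π := by linarith [pi_pos]
  have c0 : Continuous F := hF.continuous
  have c1 : Continuous (fderiv ℝ F) := hF.continuous_fderiv one_ne_zero
  set w : R2 → ℝ := fun x => ‖F x‖ ^ 2 + 2 * (‖F x‖ * ‖fderiv ℝ F x‖) with hw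
  have cw : Continuous w := by fun_prop
  have iw : ∫ x in Q2, w x =
      (∫ x in Q2, ‖F x‖ ^ 2) + 2 * ∫ x in Q2, ‖F x‖ * ‖fderiv ℝ F x‖ := by
    rw [hw, integral_add (Q2_int (by fun_prop)) (Q2_int (by fun_prop)), integral_const_mul]
  rw [← iw]
  have pw : ∀ i c, ∀ t ∈ Icc (-π) π, ‖F (pline i c t)‖ ^ 2 ≤
      C * ∫ s in (-π)..π, w (pline i c s) := by
    intro i c t ht
    have pc := pline_continuous' i c
    have := hC (fun t => F (pline i c t)) (fun t => fderiv ℝ F (pline i c t) (bv i))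
      (fun t => comp_pline (hF.differentiable (by norm_num)) i c t) (by fun_prop) t ht
    refine this.trans ?_
    gcongr
    apply intervalIntegral.integral_mono (by linarith [pi_pos])
    · apply Continuous.intervalIntegrable
      fun_prop
    · apply Continuous.intervalIntegrable
      fun_prop
    intro t
    simp only [hw]
    gcongr
    calc _ ≤ ‖fderiv ℝ F (pline i c t)‖ * ‖bv i‖ := ContinuousLinearMap.le_opNorm _ _
      _ = _ := by simp [bv_norm]
  set g : Fin 2 → ℝ → ℝ := fun i c => ∫ s in (-π)..π, w (pline i c s) with hg
  have cg : ∀ i, Continuous (g i) := fun i => by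
    apply intervalIntegral.continuous_parametric_intervalIntegral_of_continuous'
    exact cw.comp (pline_continuous i)
  have w0 : ∀ x, 0 ≤ w x := fun x => by simp only [hw]; positivity
  have g0 : ∀ i c, 0 ≤ g i c := fun i c =>
    intervalIntegral.integral_nonneg le fun s _ => w0 _
  have ig : ∀ i, ∫ c in (-π)..π, g i c = ∫ x in Q2, w x := fun i => (Q2_integral w cw i).symm
  have pc := pline_continuous 1
  rw [Q2_integral (fun x => ‖F x‖ ^ 4) (by fun_prop) 1]
  calc ∫ c in (-π)..π, ∫ t in (-π)..π, ‖F (pline 1 c t)‖ ^ 4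
      ≤ ∫ c in (-π)..π, ∫ t in (-π)..π, (C * g 1 c) * (C * g 0 t) := by
        have cg1 := cg 1
        have cg0 := cg 0
        apply intervalIntegral.integral_mono_on le
        · apply Continuous.intervalIntegrable
          apply intervalIntegral.continuous_parametric_intervalIntegral_of_continuous'
          unfold Function.uncurry
          fun_prop
        · apply Continuous.intervalIntegrable
          apply intervalIntegral.continuous_parametric_intervalIntegral_of_continuous'
          unfold Function.uncurry
          fun_prop
        intro c hc
        have pc' := pline_continuous' 1 c
        apply intervalIntegral.integral_mono_on le
        · apply Continuous.intervalIntegrable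
          fun_prop
        · apply Continuous.intervalIntegrable
          fun_prop
        intro t ht
        have e : pline 1 c t = pline 0 t c := by rw [pline_one, pline_zero]
        have h1 := pw 1 c t ht
        have h0 := pw 0 t c hc
        rw [← e] at h0
        calc ‖F (pline 1 c t)‖ ^ 4 = ‖F (pline 1 c t)‖ ^ 2 * ‖F (pline 1 c t)‖ ^ 2 := by ring
          _ ≤ _ := mul_le_mul h1 h0 (by positivity) (mul_nonneg C0 (g0 _ _))
    _ = C ^ 2 * ((∫ c in (-π)..π, g 1 c) * ∫ t in (-π)..π, g 0 t) := by
        simp_rw [intervalIntegral.integral_const_mul, intervalIntegral.integral_mul_const,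
          intervalIntegral.integral_const_mul]
        ring
    _ = _ := by rw [ig, ig]; ring

end two

instance fd_mult (j : ℕ) :
    FiniteDimensional ℝ (ContinuousMultilinearMap ℝ (fun _ : Fin j => R2) ℂ) :=
  FiniteDimensional.of_injective
    (ContinuousMultilinearMap.toMultilinearMapLinear :
      ContinuousMultilinearMap ℝ (fun _ : Fin j => R2) ℂ →ₗ[ℝ]
        MultilinearMap ℝ (fun _ : Fin j => R2) ℂ)
    ContinuousMultilinearMap.toMultilinearMap_injective

lemma cast_le_aux (a k : ℕ) (h : a ≤ k) : (a : WithTop ℕ∞) ≤ ((k : ℕ∞) : WithTop ℕ∞) := by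
  exact_mod_cast h

lemma cast_le_aux2 (j k : ℕ) (h : j + 2 ≤ k) :
    2 + (j : WithTop ℕ∞) ≤ ((k : ℕ∞) : WithTop ℕ∞) := by
  have := cast_le_aux (2 + j) k (by omega)
  rwa [Nat.cast_add] at this

lemma norm_second (n : ℕ) (φ : R2 → ℂ) (x : R2) :
    ‖fderiv ℝ (fderiv ℝ (iteratedFDeriv ℝ n φ)) x‖ = ‖iteratedFDeriv ℝ (n + 2) φ x‖ := by
  rw [fderiv_iteratedFDeriv, LinearIsometryEquiv.comp_fderiv, ← norm_fderiv_iteratedFDeriv]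
  exact LinearIsometry.norm_toContinuousLinearMap_comp
    (continuousMultilinearCurryLeftEquiv ℝ (fun _ : Fin (n + 1) => R2) ℂ).toLinearIsometry

lemma iter_periodic (n : ℕ) (φ : R2 → ℂ) (h : Periodic2 φ) : Periodic2 (iteratedFDeriv ℝ n φ) := by
  intro x k
  rw [← iteratedFDeriv_comp_add_right]
  congr 1
  exact funext fun y => h y k

/-- Squared L2 norm of the derivative of order `j`. -/
def SS (φ : R2 → ℂ) (j : ℕ) : ℝ := ∫ x in Q2, ‖iteratedFDeriv ℝ j φ x‖ ^ 2

lemma SS_nonneg (φ : R2 → ℂ) (j : ℕ) : 0 ≤ SS φ j :=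
  integral_nonneg fun x => by positivity

lemma SS_interp (j : ℕ) : ∃ C : ℝ, 0 ≤ C ∧ ∀ (k : ℕ) (φ : R2 → ℂ), j + 2 ≤ k →
    ContDiff ℝ (k : ℕ∞) φ → Periodic2 φ → SS φ (j + 1) ^ 2 ≤ C * (SS φ j * SS φ (j + 2)) := by
  obtain ⟨C, C0, hC⟩ := two_interp (ContinuousMultilinearMap ℝ (fun _ : Fin j => R2) ℂ)
  refine ⟨C, C0, fun k φ hk hφ pφ => ?_⟩
  have := hC (iteratedFDeriv ℝ j φ)
    (hφ.iteratedFDeriv_right (cast_le_aux2 j k hk)) (iter_periodic j φ pφ)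
  simpa only [norm_second, norm_fderiv_iteratedFDeriv, SS] using this

lemma SS_poincare (j k : ℕ) (φ : R2 → ℂ) (hk : j + 2 ≤ k)
    (hφ : ContDiff ℝ (k : ℕ∞) φ) (pφ : Periodic2 φ) :
    SS φ (j + 1) ≤ 4 * ((2 * π) ^ 2 * SS φ (j + 2)) := by
  have := two_poincare _ (iteratedFDeriv ℝ j φ)
    (hφ.iteratedFDeriv_right (cast_le_aux2 j k hk)) (iter_periodic j φ pφ)
  simpa only [norm_second, norm_fderiv_iteratedFDeriv, SS] using this

lemma SS_lad (j : ℕ) : ∃ C : ℝ, 0 ≤ C ∧ ∀ (k : ℕ) (φ : R2 → ℂ), j + 2 ≤ k →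
    ContDiff ℝ (k : ℕ∞) φ → Periodic2 φ →
    ∫ x in Q2, ‖iteratedFDeriv ℝ (j + 1) φ x‖ ^ 4 ≤ C * (SS φ (j + 1) * SS φ (j + 2)) := by
  obtain ⟨C, C0, hC⟩ := two_lad (ContinuousMultilinearMap ℝ (fun _ : Fin (j + 1) => R2) ℂ)
  refine ⟨C * (2 * (4 * (2 * π) ^ 2) + 8), by positivity, fun k φ hk hφ pφ => ?_⟩
  have h := hC (iteratedFDeriv ℝ (j + 1) φ)
    (hφ.iteratedFDeriv_right (m := 1) (by
      have : 1 + (j + 1) ≤ k := by omega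
      exact_mod_cast this))
  simp only [norm_fderiv_iteratedFDeriv] at h
  have c1 : Continuous (iteratedFDeriv ℝ (j + 1) φ) :=
    hφ.continuous_iteratedFDeriv (by
      have : (j + 1) ≤ k := by omega
      exact_mod_cast this)
  have c2 : Continuous (iteratedFDeriv ℝ (j + 2) φ) :=
    hφ.continuous_iteratedFDeriv (cast_le_aux _ _ hk)
  have cs := cs_Q2 c1.norm c2.norm
  have hp := SS_poincare j k φ hk hφ pφ
  have n1 := SS_nonneg φ (j + 1)
  have n2 := SS_nonneg φ (j + 2)
  unfold SS at *
  set X := ∫ x in Q2, ‖iteratedFDeriv ℝ (j + 1) φ x‖ ^ 2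
  set Y := ∫ x in Q2, ‖iteratedFDeriv ℝ (j + 2) φ x‖ ^ 2
  have h' : ∫ x in Q2, ‖iteratedFDeriv ℝ (j + 1) φ x‖ ^ 4 ≤ C * (X + 2 *
    ∫ x in Q2, ‖iteratedFDeriv ℝ (j + 1) φ x‖ * ‖iteratedFDeriv ℝ (j + 2) φ x‖) ^ 2 := h
  set Z := ∫ x in Q2, ‖iteratedFDeriv ℝ (j + 1) φ x‖ * ‖iteratedFDeriv ℝ (j + 2) φ x‖
  refine h'.trans ?_
  rw [mul_assoc]
  gcongr
  have : X ^ 2 ≤ 4 * (2 * π) ^ 2 * (X * Y) := by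
    calc X ^ 2 = X * X := by ring
      _ ≤ X * (4 * ((2 * π) ^ 2 * Y)) := by gcongr
      _ = _ := by ring
  nlinarith [sq_nonneg (X - 2 * Z)]

lemma logconv (c : ℕ → ℝ) (c0 : ∀ j, 0 ≤ c j) (n : ℕ)
    (h : ∀ j, j + 2 ≤ n → c (j + 1) ^ 2 ≤ c j * c (j + 2)) :
    ∀ m, m ≤ n → ∀ j, j ≤ m → c j ^ m ≤ c 0 ^ (m - j) * c m ^ j := by
  have s1 : ∀ j, j + 1 ≤ n → c j ^ (j + 1) ≤ c 0 * c (j + 1) ^ j := by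
    intro j
    induction j with
    | zero => intro _; simp
    | succ j ih =>
      intro hj
      have i1 := ih (by omega)
      have i2 := h j (by omega)
      rcases (c0 (j + 1)).eq_or_lt with hz | hz
      · rw [← hz, zero_pow (by omega)]
        exact mul_nonneg (c0 _) (pow_nonneg (c0 _) _)
      · refine le_of_mul_le_mul_left ?_ (pow_pos hz j)
        calc c (j + 1) ^ j * c (j + 1) ^ (j + 1 + 1) = (c (j + 1) ^ 2) ^ (j + 1) := by ring
          _ ≤ (c j * c (j + 2)) ^ (j + 1) := by gcongr
          _ = c j ^ (j + 1) * c (j + 2) ^ (j + 1) := by ring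
          _ ≤ (c 0 * c (j + 1) ^ j) * c (j + 2) ^ (j + 1) := by
              have := c0 (j + 2)
              gcongr
          _ = _ := by ring
  intro m
  induction m with
  | zero =>
    intro _ j hj
    obtain rfl : j = 0 := by omega
    simp
  | succ m ih =>
    intro hm j hj
    rcases hj.eq_or_lt with rfl | hj
    · simp
    rcases Nat.eq_zero_or_pos m with rfl | hm0
    · obtain rfl : j = 0 := by omega
      simp
    have i1 := ih (by omega) j (by omega)
    have i2 := s1 m hm
    obtain ⟨d, rfl⟩ := Nat.exists_eq_add_of_le (Nat.lt_succ_iff.1 hj)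
    rw [Nat.add_sub_cancel_left] at i1
    have e : j + d + 1 - j = d + 1 := by omega
    rw [e]
    have n0 := c0 0
    have n1 := c0 j
    have n2 := c0 (j + d)
    have n3 := c0 (j + d + 1)
    refine le_of_pow_le_pow_left₀ (n := j + d) (by omega) (by positivity) ?_
    calc (c j ^ (j + d + 1)) ^ (j + d) = (c j ^ (j + d)) ^ (j + d + 1) := by
          rw [← pow_mul, ← pow_mul, mul_comm]
      _ ≤ (c 0 ^ d * c (j + d) ^ j) ^ (j + d + 1) := by gcongr
      _ = c 0 ^ (d * (j + d + 1)) * (c (j + d) ^ (j + d + 1)) ^ j := by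
          rw [mul_pow, ← pow_mul, ← pow_mul, ← pow_mul, mul_comm j]
      _ ≤ c 0 ^ (d * (j + d + 1)) * (c 0 * c (j + d + 1) ^ (j + d)) ^ j := by gcongr
      _ = _ := by ring

lemma SS_logconv (k k₀ : ℕ) (h1 : k₀ < k) : ∃ K : ℝ, 0 ≤ K ∧ ∀ φ : R2 → ℂ,
    ContDiff ℝ (k : ℕ∞) φ → Periodic2 φ → ∀ m, m ≤ k - k₀ →
    SS φ (k₀ + m) ^ (k - k₀) ≤ K * (SS φ k₀ ^ (k - k₀ - m) * SS φ k ^ m) := by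
  choose C C0 hC using SS_interp
  set D : ℝ := 1 + ∑ j ∈ Finset.range k, C j with hD
  have D1 : 1 ≤ D := by
    have := Finset.sum_nonneg (s := Finset.range k) fun j _ => C0 j
    linarith
  have CD : ∀ j < k, C j ≤ D ^ 2 := by
    intro j hj
    have := Finset.single_le_sum (s := Finset.range k) (f := C) (fun j _ => C0 j)
      (Finset.mem_range.2 hj)
    nlinarith
  set N := k - k₀ with hN
  refine ⟨D ^ (N ^ 2 * N), by positivity, ?_⟩
  intro φ hφ pφ m hm
  have key := logconv (fun j => D ^ (j ^ 2) * SS φ (k₀ + j))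
    (fun j => mul_nonneg (by positivity) (SS_nonneg _ _)) N (by
      intro j hj
      have h := hC (k₀ + j) k φ (by omega) hφ pφ
      have hh := CD (k₀ + j) (by omega)
      have n0 := SS_nonneg φ (k₀ + j)
      have n1 := SS_nonneg φ (k₀ + j + 2)
      rw [← add_assoc, ← add_assoc]
      calc (D ^ ((j + 1) ^ 2) * SS φ (k₀ + j + 1)) ^ 2
          = (D ^ ((j + 1) ^ 2)) ^ 2 * SS φ (k₀ + j + 1) ^ 2 := by ring
        _ ≤ (D ^ ((j + 1) ^ 2)) ^ 2 * (D ^ 2 * (SS φ (k₀ + j) * SS φ (k₀ + j + 2))) := by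
            gcongr
            exact h.trans (by gcongr)
        _ = _ := by ring) N le_rfl m hm
  have e : k₀ + N = k := by omega
  simp only [e, add_zero, ne_eq, OfNat.ofNat_ne_zero, not_false_eq_true, zero_pow, pow_zero,
    one_mul] at key
  have n0 := SS_nonneg φ (k₀ + m)
  have n1 := SS_nonneg φ k₀
  have n2 := SS_nonneg φ k
  calc SS φ (k₀ + m) ^ N ≤ (D ^ (m ^ 2) * SS φ (k₀ + m)) ^ N := by
        gcongr
        exact le_mul_of_one_le_left n0 (one_le_pow₀ D1)
    _ ≤ _ := key
    _ = D ^ (N ^ 2 * m) * (SS φ k₀ ^ (N - m) * SS φ k ^ m) := by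
        rw [mul_pow, ← pow_mul]; ring
    _ ≤ _ := by gcongr


/-- Gagliardo–Nirenberg lemma, general case. -/
theorem stmt2 (k k₀ l : ℕ) (h1 : k₀ < k) (h2 : k₀ ≤ l) (h3 : l ≤ k - 1)
    (h4 : ¬(k₀ = 0 ∧ l = 0)) :
    ∃ C > 0, ∀ φ : R2 → ℂ, ContDiff ℝ (k : ℕ∞) φ → Periodic2 φ →
      (∫ x in Q2, ‖iteratedFDeriv ℝ l φ x‖ ^ 4) ^ ((1:ℝ)/4) ≤
        C * ((∫ x in Q2, ‖iteratedFDeriv ℝ k₀ φ x‖ ^ 2) ^ ((1:ℝ)/2))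
              ^ (((k:ℝ) - l - 1/2) / ((k:ℝ) - k₀)) *
            ((∫ x in Q2, ‖iteratedFDeriv ℝ k φ x‖ ^ 2) ^ ((1:ℝ)/2))
              ^ (((l:ℝ) - k₀ + 1/2) / ((k:ℝ) - k₀)) := by
  have hl : 1 ≤ l := by omega
  obtain ⟨j, rfl⟩ : ∃ j, l = j + 1 := ⟨l - 1, by omega⟩
  obtain ⟨C, C0, hC⟩ := SS_lad j
  obtain ⟨K, K0, hK⟩ := SS_logconv k k₀ h1
  obtain ⟨N, rfl⟩ := Nat.exists_eq_add_of_le h1.le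
  obtain ⟨m, hm⟩ := Nat.exists_eq_add_of_le h2
  have hN : 0 < N := by omega
  have hmN : m + 1 ≤ N := by omega
  rw [Nat.add_sub_cancel_left] at hK
  set A : ℝ := C ^ N * (K * K) with hA
  refine ⟨A ^ ((1:ℝ) / (4 * N)) + 1, by positivity, ?_⟩
  intro φ hφ pφ
  have t := hC (k₀ + N) φ (by omega) hφ pφ
  have i1 := hK φ hφ pφ m (by omega)
  have i2 := hK φ hφ pφ (m + 1) (by omega)
  rw [← hm] at i1
  rw [← add_assoc, ← hm] at i2
  have n0 := SS_nonneg φ k₀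
  have n1 := SS_nonneg φ (k₀ + N)
  have n2 := SS_nonneg φ (j + 1)
  have n3 := SS_nonneg φ (j + 2)
  have nT : 0 ≤ ∫ x in Q2, ‖iteratedFDeriv ℝ (j + 1) φ x‖ ^ 4 :=
    integral_nonneg fun x => by positivity
  change (∫ x in Q2, ‖iteratedFDeriv ℝ (j + 1) φ x‖ ^ 4) ^ ((1:ℝ)/4) ≤
    (A ^ ((1:ℝ) / (4 * N)) + 1) * ((SS φ k₀) ^ ((1:ℝ)/2)) ^ _ * ((SS φ (k₀ + N)) ^ ((1:ℝ)/2)) ^ _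
  set T := ∫ x in Q2, ‖iteratedFDeriv ℝ (j + 1) φ x‖ ^ 4
  set X := SS φ k₀
  set Y := SS φ (k₀ + N)
  have main : T ^ N ≤ A * (X ^ (2 * (N - m - 1) + 1) * Y ^ (2 * m + 1)) := by
    have e : N - m = (N - m - 1) + 1 := by omega
    have e' : N - (m + 1) = N - m - 1 := by omega
    rw [e'] at i2
    rw [e] at i1
    calc T ^ N ≤ (C * (SS φ (j + 1) * SS φ (j + 2))) ^ N := by gcongr
      _ = C ^ N * (SS φ (j + 1) ^ N * SS φ (j + 2) ^ N) := by rw [mul_pow, mul_pow]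
      _ ≤ C ^ N * ((K * (X ^ (N - m - 1 + 1) * Y ^ m)) * (K * (X ^ (N - m - 1) * Y ^ (m + 1)))) := by
          gcongr
      _ = _ := by rw [hA]; ring
  have A0 : 0 ≤ A := by positivity
  clear_value A
  have hN' : (N : ℝ) ≠ 0 := by positivity
  rw [← rpow_mul n0, ← rpow_mul n1]
  have lm : ((j + 1 : ℕ) : ℝ) = k₀ + m := by exact_mod_cast hm
  have ex : (1:ℝ) / 2 * ((((k₀ + N : ℕ) : ℝ) - ((j + 1 : ℕ) : ℝ) - 1 / 2) /
      (((k₀ + N : ℕ) : ℝ) - k₀)) = ((2 * (N - m - 1) + 1 : ℕ) : ℝ) * (1 / (4 * N)) := by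
    have : ((N - m - 1 : ℕ) : ℝ) = N - m - 1 := by
      rw [Nat.sub_sub, Nat.cast_sub hmN]; push_cast; ring
    rw [lm]
    push_cast
    rw [this]
    have : (k₀ : ℝ) + N - k₀ = N := by ring
    rw [this]
    field_simp
    ring
  have ey : (1:ℝ) / 2 * ((((j + 1 : ℕ) : ℝ) - k₀ + 1 / 2) /
      (((k₀ + N : ℕ) : ℝ) - k₀)) = ((2 * m + 1 : ℕ) : ℝ) * (1 / (4 * N)) := by
    rw [lm]
    push_cast
    have : (k₀ : ℝ) + N - k₀ = N := by ring
    rw [this]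
    field_simp
    ring
  rw [ex, ey, rpow_mul n0, rpow_mul n1, rpow_natCast, rpow_natCast]
  have eT : T ^ ((1:ℝ) / 4) = (T ^ N) ^ ((1:ℝ) / (4 * N)) := by
    rw [← rpow_natCast T N, ← rpow_mul nT]
    congr 1
    field_simp
  rw [eT]
  calc (T ^ N) ^ ((1:ℝ) / (4 * N)) ≤
      (A * (X ^ (2 * (N - m - 1) + 1) * Y ^ (2 * m + 1))) ^ ((1:ℝ) / (4 * N)) := by
        gcongr
    _ = A ^ ((1:ℝ) / (4 * N)) * (X ^ (2 * (N - m - 1) + 1)) ^ ((1:ℝ) / (4 * N)) *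
        (Y ^ (2 * m + 1)) ^ ((1:ℝ) / (4 * N)) := by
        rw [mul_rpow A0 (by positivity), mul_rpow (by positivity) (by positivity), mul_assoc]
    _ ≤ _ := by
        gcongr
        linarith
end
end

section
/- There exists a constant C > 0 such that for every finitely supported function f : ℤ² → ℂ with f(0,0) = 0, one has ( ∑_{k∈ℤ²} |f(k)|^{4/3} )^{3/4} ≤ C ( ∑_{k∈ℤ²} |f(k)|² )^{1/4} ( ∑_{k∈ℤ²} ‖k‖² |f(k)|² )^{1/4}, where ‖k‖ denotes the Euclidean norm of k ∈ ℤ² ⊂ ℝ². -/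
lemma aux1 (R : ℝ) (hR : 1 ≤ R) (N : ℕ) :
    ∑ a ∈ Finset.Icc (-(N:ℤ)) N, R^2 / (R^2 + (a:ℝ)^2) ≤ 1 + 4 * R^2 * (1/R - 1/(R+N)) := by
  induction N with
  | zero =>
    have : R ≠ 0 := by positivity
    simp [this]
  | succ n ih =>
    have h : Finset.Icc (-((n+1:ℕ):ℤ)) ((n+1:ℕ):ℤ) =
        insert ((n:ℤ)+1) (insert (-((n:ℤ)+1)) (Finset.Icc (-(n:ℤ)) n)) := by
      ext x
      simp only [Finset.mem_Icc, Finset.mem_insert]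
      push_cast
      omega
    rw [h, Finset.sum_insert (by simp; omega), Finset.sum_insert (by simp)]
    have hn : (0:ℝ) ≤ n := Nat.cast_nonneg n
    have key : R^2 / (R^2 + ((n:ℝ)+1)^2) ≤ 2 * R^2 * (1/(R+n) - 1/(R+(n+1))) := by
      have e : 1/(R+n) - 1/(R+((n:ℝ)+1)) = 1 / ((R+n) * (R+(n+1))) := by
        field_simp
        ring
      rw [e, mul_one_div, div_le_div_iff₀ (by positivity) (by positivity)]
      have : (R+n) * (R+(n+1)) ≤ 2 * (R^2 + ((n:ℝ)+1)^2) := by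
        nlinarith [sq_nonneg (R - (n+1))]
      nlinarith [sq_nonneg R, mul_le_mul_of_nonneg_left this (sq_nonneg R)]
    push_cast
    have e3 : (-((n:ℝ)+1))^2 = ((n:ℝ)+1)^2 := by ring
    simp only [e3]
    linarith

lemma aux2 (R : ℝ) (hR : 1 ≤ R) (N : ℕ) :
    ∑ a ∈ Finset.Icc (-(N:ℤ)) N, R^2 / (R^2 + (a:ℝ)^2) ≤ 5 * R := by
  refine (aux1 R hR N).trans ?_
  have h1 : 0 ≤ 1/(R+N) := by positivity
  have h2 : 4 * R^2 * (1/R) = 4 * R := by field_simp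
  nlinarith [mul_nonneg (sq_nonneg R) h1]

lemma aux3 (R : ℝ) (hR : 1 ≤ R) (N : ℕ) :
    ∑ m ∈ Finset.Icc (-(N:ℤ)) N ×ˢ Finset.Icc (-(N:ℤ)) N,
      (1 / (1 + ((m.1:ℝ)^2 + (m.2:ℝ)^2) / R^2))^2 ≤ 25 * R^2 := by
  have h := aux2 R hR N
  have h0 : 0 ≤ ∑ a ∈ Finset.Icc (-(N:ℤ)) N, R^2 / (R^2 + (a:ℝ)^2) :=
    Finset.sum_nonneg fun _ _ => by positivity
  calc _ ≤ ∑ m ∈ Finset.Icc (-(N:ℤ)) N ×ˢ Finset.Icc (-(N:ℤ)) N,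
      (R^2 / (R^2 + (m.1:ℝ)^2)) * (R^2 / (R^2 + (m.2:ℝ)^2)) := by
        refine Finset.sum_le_sum fun m _ => ?_
        have hR0 : 0 < R := by linarith
        have e : 1 / (1 + ((m.1:ℝ)^2 + (m.2:ℝ)^2) / R^2)
            = R^2 / (R^2 + (m.1:ℝ)^2 + (m.2:ℝ)^2) := by
          field_simp
          try ring
        rw [e, sq]
        have p1 := sq_nonneg (m.1:ℝ)
        have p2 := sq_nonneg (m.2:ℝ)
        apply mul_le_mul
        · exact div_le_div_of_nonneg_left (by positivity) (by positivity) (by linarith)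
        · exact div_le_div_of_nonneg_left (by positivity) (by positivity) (by linarith)
        · positivity
        · positivity
    _ = (∑ a ∈ Finset.Icc (-(N:ℤ)) N, R^2 / (R^2 + (a:ℝ)^2)) *
        (∑ a ∈ Finset.Icc (-(N:ℤ)) N, R^2 / (R^2 + (a:ℝ)^2)) := by
        rw [Finset.sum_mul_sum, Finset.sum_product]
    _ ≤ (5 * R) * (5 * R) := mul_le_mul h h h0 (by linarith)
    _ = _ := by ring

lemma aux4 (s : Finset (ℤ × ℤ)) (g w : ℤ × ℤ → ℝ) (hg : ∀ m, 0 ≤ g m) (hw : ∀ m, 0 < w m) :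
    ∑ m ∈ s, g m ^ ((4:ℝ)/3) ≤
      (∑ m ∈ s, w m * g m ^ 2) ^ ((2:ℝ)/3) * (∑ m ∈ s, (1 / w m)^2) ^ ((1:ℝ)/3) := by
  have hpq : Real.HolderConjugate (3/2) 3 := by
    rw [Real.holderConjugate_iff]; norm_num
  have := Real.inner_le_Lp_mul_Lq_of_nonneg s hpq
    (f := fun m => (w m * g m ^ 2) ^ ((2:ℝ)/3)) (g := fun m => ((1 / w m)^2) ^ ((1:ℝ)/3))
    (fun m _ => by have := hw m; positivity) (fun m _ => by have := hw m; positivity)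
  have e1 : ∀ m, ((w m * g m ^ 2) ^ ((2:ℝ)/3)) ^ ((3:ℝ)/2) = w m * g m ^ 2 := fun m => by
    have := hw m
    rw [← Real.rpow_mul (by positivity)]; norm_num
  have e2 : ∀ m, (((1 / w m)^2) ^ ((1:ℝ)/3)) ^ (3:ℝ) = (1 / w m)^2 := fun m => by
    have := hw m
    rw [← Real.rpow_mul (by positivity)]; norm_num
  have e3 : ∀ m, (w m * g m ^ 2) ^ ((2:ℝ)/3) * ((1 / w m)^2) ^ ((1:ℝ)/3) = g m ^ ((4:ℝ)/3) :=
    fun m => by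
      have h := hw m
      rw [Real.mul_rpow h.le (by positivity), ← Real.rpow_natCast (g m), ← Real.rpow_natCast (1 / w m),
        ← Real.rpow_mul (hg m), ← Real.rpow_mul (by positivity), one_div, Real.inv_rpow h.le]
      norm_num
      have : w m ^ ((2:ℝ)/3) ≠ 0 := by positivity
      field_simp
  simp only [e1, e2, e3] at this
  convert this using 3
  norm_num

lemma aux5 (A B D : ℝ) (hA : 0 < A) (hB : 0 < B) (hD : 0 ≤ D) (h : D ≤ 25 * (B/A)) :
    (2*A) ^ ((2:ℝ)/3) * D ^ ((1:ℝ)/3) ≤ (100 * A * B) ^ ((1:ℝ)/3) := by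
  calc _ ≤ (2*A) ^ ((2:ℝ)/3) * (25 * (B/A)) ^ ((1:ℝ)/3) := by
        gcongr
    _ = ((2*A)^2) ^ ((1:ℝ)/3) * (25 * (B/A)) ^ ((1:ℝ)/3) := by
        rw [← Real.rpow_natCast (2*A), ← Real.rpow_mul (by positivity)]; norm_num
    _ = _ := by
        rw [← Real.mul_rpow (by positivity) (by positivity)]
        congr 1
        field_simp
        norm_num

lemma aux6 (L A B : ℝ) (hL : 0 ≤ L) (hA : 0 ≤ A) (hB : 0 ≤ B)
    (h : L ≤ (100 * A * B) ^ ((1:ℝ)/3)) :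
    L ^ ((3:ℝ)/4) ≤ (100:ℝ) ^ ((1:ℝ)/4) * A ^ ((1:ℝ)/4) * B ^ ((1:ℝ)/4) := by
  calc _ ≤ ((100 * A * B) ^ ((1:ℝ)/3)) ^ ((3:ℝ)/4) := by gcongr
    _ = (100 * A * B) ^ ((1:ℝ)/4) := by
      rw [← Real.rpow_mul (by positivity)]; norm_num
    _ = _ := by
      rw [Real.mul_rpow (by positivity) hB, Real.mul_rpow (by norm_num) hA]

/-- Fourier-coefficient form of the L⁴ Gagliardo–Nirenberg estimate on 𝕋². -/
theorem stmt3 :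
    ∃ C > 0, ∀ f : ℤ × ℤ → ℂ, (Function.support f).Finite → f (0, 0) = 0 →
      (∑' m : ℤ × ℤ, ‖f m‖ ^ ((4:ℝ)/3)) ^ ((3:ℝ)/4) ≤
        C * (∑' m : ℤ × ℤ, ‖f m‖ ^ 2) ^ ((1:ℝ)/4) *
          (∑' m : ℤ × ℤ, ((m.1:ℝ)^2 + (m.2:ℝ)^2) * ‖f m‖ ^ 2) ^ ((1:ℝ)/4) := by
  refine ⟨(100:ℝ) ^ ((1:ℝ)/4), by positivity, fun f hf h0 => ?_⟩
  obtain ⟨N, hN⟩ : ∃ N : ℕ, ∀ m, f m ≠ 0 → m.1.natAbs ≤ N ∧ m.2.natAbs ≤ N := by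
    refine ⟨hf.toFinset.sup (fun m => max m.1.natAbs m.2.natAbs), fun m hm => ?_⟩
    have := Finset.le_sup (f := fun m : ℤ × ℤ => max m.1.natAbs m.2.natAbs)
      (hf.mem_toFinset.2 hm)
    exact max_le_iff.1 this
  set s := Finset.Icc (-(N:ℤ)) N ×ˢ Finset.Icc (-(N:ℤ)) N with hs
  have hz : ∀ m, m ∉ s → f m = 0 := fun m hm => by
    by_contra h
    have := hN m h
    apply hm
    simp only [hs, Finset.mem_product, Finset.mem_Icc]
    omega
  rw [tsum_eq_sum (s := s) (fun m hm => by rw [hz m hm]; norm_num),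
    tsum_eq_sum (s := s) (fun m hm => by rw [hz m hm]; norm_num),
    tsum_eq_sum (s := s) (fun m hm => by rw [hz m hm]; norm_num)]
  set A := ∑ m ∈ s, ‖f m‖ ^ 2 with hA
  set B := ∑ m ∈ s, ((m.1:ℝ)^2 + (m.2:ℝ)^2) * ‖f m‖ ^ 2 with hB
  have hA0 : 0 ≤ A := Finset.sum_nonneg fun _ _ => by positivity
  have hAB : A ≤ B := by
    refine Finset.sum_le_sum fun m _ => ?_
    by_cases hm : m = (0, 0)
    · simp [hm, h0]
    · have h1 : (1:ℤ) ≤ m.1^2 + m.2^2 := by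
        by_contra hc
        apply hm
        have a1 := sq_nonneg m.1
        have a2 := sq_nonneg m.2
        exact Prod.ext (pow_eq_zero_iff two_ne_zero |>.1 (by omega))
          (pow_eq_zero_iff two_ne_zero |>.1 (by omega))
      have h2 : (1:ℝ) ≤ (m.1:ℝ)^2 + (m.2:ℝ)^2 := by exact_mod_cast h1
      exact le_mul_of_one_le_left (by positivity) h2
  have hL0 : 0 ≤ ∑ m ∈ s, ‖f m‖ ^ ((4:ℝ)/3) := Finset.sum_nonneg fun _ _ => by positivity
  have main : ∑ m ∈ s, ‖f m‖ ^ ((4:ℝ)/3) ≤ (100 * A * B) ^ ((1:ℝ)/3) := by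
    rcases hA0.eq_or_lt with hA' | hA'
    · have hz2 : ∀ m ∈ s, ‖f m‖ = 0 := fun m hm => by
        have := (Finset.sum_eq_zero_iff_of_nonneg (fun m _ => by positivity)).1 hA'.symm m hm
        exact pow_eq_zero_iff two_ne_zero |>.1 this
      rw [Finset.sum_eq_zero fun m hm => by rw [hz2 m hm]; norm_num]
      have : 0 ≤ B := hA0.trans hAB
      positivity
    · have hB' : 0 < B := hA'.trans_le hAB
      have hR2 : (√(B/A))^2 = B/A := Real.sq_sqrt (by positivity)
      have hR : 1 ≤ √(B/A) := Real.one_le_sqrt.2 ((one_le_div hA').2 hAB)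
      have h3 := aux3 _ hR N
      rw [hR2, ← hs] at h3
      have h4 := aux4 s (fun m => ‖f m‖) (fun m => 1 + ((m.1:ℝ)^2 + (m.2:ℝ)^2) / (B/A))
        (fun m => norm_nonneg _) (fun m => by positivity)
      have h5 : ∑ m ∈ s, (1 + ((m.1:ℝ)^2 + (m.2:ℝ)^2) / (B/A)) * ‖f m‖^2 = 2 * A := by
        have : ∀ m : ℤ × ℤ, (1 + ((m.1:ℝ)^2 + (m.2:ℝ)^2) / (B/A)) * ‖f m‖^2 =
          ‖f m‖^2 + (A/B) * (((m.1:ℝ)^2 + (m.2:ℝ)^2) * ‖f m‖^2) := fun m => by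
            field_simp
        simp only [this]
        rw [Finset.sum_add_distrib, ← Finset.mul_sum, ← hA, ← hB]
        field_simp
        norm_num
      rw [h5] at h4
      refine h4.trans ?_
      exact aux5 A B _ hA' hB' (Finset.sum_nonneg fun _ _ => sq_nonneg _) h3
  have hB0 : 0 ≤ B := hA0.trans hAB
  exact aux6 _ A B hL0 hA0 hB0 main
end
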